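/- arXiv:2502.16370 — 6 statements merged into one kernel-verified Lean document; each statement's English description precedes it below -/
import Mathlib

section
/- Let μ be the uniform probability measure (normalized Lebesgue measure) on the unit square [0,1]² ⊂ ℝ² and ν the uniform probability measure on [2,3] × [0,1] ⊂ ℝ². Define I(x,y) := ‖x−y‖ − (y₁ − x₁) for x = (x₁,x₂) ∈ [0,1]² and y = (y₁,y₂) ∈ [2,3] × [0,1], where ‖·‖ is the Euclidean norm (note I ≥ 0). Then there exists a constant C > 0 such that for all ε ∈ (0,1], ∫∫ e^{−I(x,y)/ε} dμ(x) dν(y) ≤ C √ε. -/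
open MeasureTheory Metric Filter Topology Set

noncomputable section

/-- The unit square `[0,1]² ⊂ ℝ²`. -/
def sqX : Set (EuclideanSpace ℝ (Fin 2)) := {x | x 0 ∈ Set.Icc (0:ℝ) 1 ∧ x 1 ∈ Set.Icc (0:ℝ) 1}

/-- The translated unit square `[2,3] × [0,1] ⊂ ℝ²`. -/
def sqY : Set (EuclideanSpace ℝ (Fin 2)) := {y | y 0 ∈ Set.Icc (2:ℝ) 3 ∧ y 1 ∈ Set.Icc (0:ℝ) 1}

/-- The uniform (normalized Lebesgue) probability measure on a set. -/
def unifOn (A : Set (EuclideanSpace ℝ (Fin 2))) : Measure (EuclideanSpace ℝ (Fin 2)) :=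
  (volume A)⁻¹ • volume.restrict A

def toPr (x : EuclideanSpace ℝ (Fin 2)) : ℝ × ℝ := (x 0, x 1)

lemma toPr_mp : MeasurePreserving toPr volume volume :=
  (volume_preserving_finTwoArrow ℝ).comp (PiLp.volume_preserving_ofLp (Fin 2))

lemma sqX_eq : sqX = toPr ⁻¹' (Icc (0:ℝ) 1 ×ˢ Icc (0:ℝ) 1) := rfl

lemma sqY_eq : sqY = toPr ⁻¹' (Icc (2:ℝ) 3 ×ˢ Icc (0:ℝ) 1) := rfl

lemma meas_sqX : MeasurableSet sqX := by
  rw [sqX_eq]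
  exact toPr_mp.measurable (measurableSet_Icc.prod measurableSet_Icc)

lemma meas_sqY : MeasurableSet sqY := by
  rw [sqY_eq]
  exact toPr_mp.measurable (measurableSet_Icc.prod measurableSet_Icc)

lemma vol_sqX : volume sqX = 1 := by
  rw [sqX_eq, toPr_mp.measure_preimage (measurableSet_Icc.prod measurableSet_Icc).nullMeasurableSet,
    Measure.volume_eq_prod, Measure.prod_prod]
  simp

lemma vol_sqY : volume sqY = 1 := by
  rw [sqY_eq, toPr_mp.measure_preimage (measurableSet_Icc.prod measurableSet_Icc).nullMeasurableSet,
    Measure.volume_eq_prod, Measure.prod_prod]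
  norm_num

lemma unif_sqX : unifOn sqX = volume.restrict sqX := by
  simp [unifOn, vol_sqX]

lemma unif_sqY : unifOn sqY = volume.restrict sqY := by
  simp [unifOn, vol_sqY]

lemma slack_bound {x y : EuclideanSpace ℝ (Fin 2)} (hx : x ∈ sqX) (hy : y ∈ sqY) :
    (x 1 - y 1) ^ 2 / 8 ≤ ‖x - y‖ - (y 0 - x 0) := by
  obtain ⟨⟨h1, h2⟩, h3, h4⟩ := hx
  obtain ⟨⟨k1, k2⟩, k3, k4⟩ := hy
  have hb : (x 1 - y 1) ^ 2 ≤ 1 := by nlinarith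
  have hn : (y 0 - x 0) + (x 1 - y 1) ^ 2 / 8 ≤ ‖x - y‖ := by
    rw [EuclideanSpace.norm_eq]
    apply Real.le_sqrt_of_sq_le
    simp only [Fin.sum_univ_two, Real.norm_eq_abs, sq_abs, PiLp.sub_apply]
    have hq := sq_nonneg (x 1 - y 1)
    generalize (x 1 - y 1) ^ 2 = q at *
    have ha : y 0 - x 0 ≤ 3 := by linarith
    nlinarith [mul_le_mul_of_nonneg_left ha hq, mul_le_mul_of_nonneg_left hb hq]
  linarith

lemma gauss_lint (b : ℝ) (hb : 0 < b) (c : ℝ) :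
    ∫⁻ t : ℝ, ENNReal.ofReal (Real.exp (-b * (t - c) ^ 2)) = ENNReal.ofReal √(Real.pi / b) := by
  rw [lintegral_sub_right_eq_self (fun t : ℝ => ENNReal.ofReal (Real.exp (-b * t ^ 2))) c,
    ← integral_gaussian, ofReal_integral_eq_lintegral_ofReal (integrable_exp_neg_mul_sq hb)]
  exact Eventually.of_forall fun _ => (Real.exp_pos _).le

lemma inner_bound (b : ℝ) (hb : 0 < b) (c : ℝ) :
    ∫⁻ x in sqX, ENNReal.ofReal (Real.exp (-b * (x 1 - c) ^ 2)) ≤ ENNReal.ofReal √(Real.pi / b) := by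
  have hm : Measurable fun p : ℝ × ℝ => ENNReal.ofReal (Real.exp (-b * (p.2 - c) ^ 2)) := by
    fun_prop
  have h := toPr_mp.setLIntegral_comp_preimage
    (measurableSet_Icc.prod measurableSet_Icc : MeasurableSet (Icc (0:ℝ) 1 ×ˢ Icc (0:ℝ) 1)) hm
  rw [← sqX_eq] at h
  refine (le_of_eq h).trans ?_
  rw [Measure.volume_eq_prod, ← Measure.prod_restrict, lintegral_prod _ hm.aemeasurable]
  simp only [lintegral_const, Measure.restrict_apply MeasurableSet.univ, univ_inter,
    Real.volume_Icc, sub_zero, ENNReal.ofReal_one, mul_one]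
  rw [← gauss_lint b hb c]
  exact setLIntegral_le_lintegral _ _

/-- For uniform measures on `[0,1]²` and `[2,3]×[0,1]` and the slack
`I(x,y) = ‖x−y‖ − (y₁ − x₁)`, one has `∫∫ e^{−I/ε} dμ dν ≤ C √ε` for `0 < ε ≤ 1`. -/
theorem stmt6 :
    ∃ C : ℝ, 0 < C ∧ ∀ ε : ℝ, 0 < ε → ε ≤ 1 →
      (∫ z, Real.exp (-(‖z.1 - z.2‖ - (z.2 0 - z.1 0)) / ε) ∂((unifOn sqX).prod (unifOn sqY)))
        ≤ C * Real.sqrt ε := by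
  refine ⟨√(8 * Real.pi), by positivity, fun ε he _ => ?_⟩
  have hb : 0 < 1 / (8 * ε) := by positivity
  rw [unif_sqX, unif_sqY]
  have hmeas : Measurable fun z : EuclideanSpace ℝ (Fin 2) × EuclideanSpace ℝ (Fin 2) =>
      Real.exp (-(‖z.1 - z.2‖ - (z.2 0 - z.1 0)) / ε) := by
    fun_prop
  rw [integral_eq_lintegral_of_nonneg_ae (Eventually.of_forall fun _ => (Real.exp_pos _).le)
    hmeas.aestronglyMeasurable]
  have hfin : √(8 * Real.pi) * √ε = √(Real.pi / (1 / (8 * ε))) := by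
    rw [← Real.sqrt_mul (by positivity)]
    congr 1
    field_simp
  rw [hfin]
  refine ENNReal.toReal_le_of_le_ofReal (Real.sqrt_nonneg _) ?_
  rw [lintegral_prod_symm _ hmeas.ennreal_ofReal.aemeasurable]
  calc _ ≤ ∫⁻ y in sqY, ENNReal.ofReal √(Real.pi / (1 / (8 * ε))) := by
        refine setLIntegral_mono' meas_sqY fun y hy => ?_
        refine le_trans (setLIntegral_mono' meas_sqX fun x hx => ?_) (inner_bound _ hb (y 1))
        apply ENNReal.ofReal_le_ofReal
        apply Real.exp_le_exp.2
        have h := slack_bound hx hy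
        have e : -(1 / (8 * ε)) * (x 1 - y 1) ^ 2 = -((x 1 - y 1) ^ 2 / 8) / ε := by
          field_simp
        rw [e]
        exact div_le_div_of_nonneg_right (neg_le_neg h) he.le
    _ = _ := by simp [vol_sqY]
end
end

section
/- Let a, d₀, d₁ ∈ ℝ^n and r > 0 satisfy ‖a − d₀‖ ≥ r and ‖a − d₁‖ ≥ r, and set v := (a − d₀)/‖a − d₀‖ − (a − d₁)/‖a − d₁‖. Assume v ≠ 0, let 0 < t ≤ r/2 and set a' := a − t·v/‖v‖. Then ‖a − d₀‖ − ‖a' − d₀‖ + ‖a' − d₁‖ − ‖a − d₁‖ ≥ t‖v‖ − 2t²/r. Moreover, if d₁ ≠ a, then ‖v‖ ≥ dist(d₀, L)/‖a − d₀‖, where L is the affine line through a and d₁ and dist(d₀, L) is the Euclidean distance from d₀ to L. -/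
open MeasureTheory Metric Filter Topology Set

noncomputable section

/-- Quantitative four-point inequality: perturbing `a` by a step of size `t`
in the direction of `v`, the difference of the unit vectors pointing from `d₀` and `d₁`
towards `a`, produces a first-order gain `t‖v‖` in the cyclical quantity, with a
second-order error `2t²/r`; moreover `‖v‖` is bounded below by the ratio of the distance
from `d₀` to the line through `a` and `d₁` and the distance `‖a - d₀‖`. -/
theorem stmt8 {n : ℕ} (a d₀ d₁ : EuclideanSpace ℝ (Fin n)) (r : ℝ) (hr : 0 < r)
    (h₀ : r ≤ ‖a - d₀‖) (h₁ : r ≤ ‖a - d₁‖)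
    (v : EuclideanSpace ℝ (Fin n))
    (hv : v = ‖a - d₀‖⁻¹ • (a - d₀) - ‖a - d₁‖⁻¹ • (a - d₁))
    (hvne : v ≠ 0) (t : ℝ) (ht : 0 < t) (htr : t ≤ r / 2)
    (a' : EuclideanSpace ℝ (Fin n)) (ha' : a' = a - (t * ‖v‖⁻¹) • v) :
    t * ‖v‖ - 2 * t ^ 2 / r ≤ ‖a - d₀‖ - ‖a' - d₀‖ + ‖a' - d₁‖ - ‖a - d₁‖ ∧
      (d₁ ≠ a →
        Metric.infDist d₀ ((affineSpan ℝ ({a, d₁} : Set (EuclideanSpace ℝ (Fin n)))) :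
          Set (EuclideanSpace ℝ (Fin n))) / ‖a - d₀‖ ≤ ‖v‖) := by
  have hP : 0 < ‖a - d₀‖ := lt_of_lt_of_le hr h₀
  have hQ : 0 < ‖a - d₁‖ := lt_of_lt_of_le hr h₁
  have hV : 0 < ‖v‖ := norm_pos_iff.mpr hvne
  constructor
  · have e0 : a' - d₀ = (a - d₀) - (t * ‖v‖⁻¹) • v := by rw [ha']; abel
    have e1 : a' - d₁ = (a - d₁) - (t * ‖v‖⁻¹) • v := by rw [ha']; abel
    have hiv : inner ℝ (a - d₀) v / ‖a - d₀‖ - inner ℝ (a - d₁) v / ‖a - d₁‖ = ‖v‖ ^ 2 := by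
      rw [← real_inner_self_eq_norm_sq]
      nth_rewrite 3 [hv]
      rw [inner_sub_left (‖a - d₀‖⁻¹ • (a - d₀)), real_inner_smul_left, real_inner_smul_left]
      ring
    have hs : ‖(t * ‖v‖⁻¹) • v‖ = t := by
      rw [norm_smul, Real.norm_of_nonneg (by positivity)]
      field_simp
    rw [e0, e1]
    have n0 := norm_sub_sq_real (a - d₀) ((t * ‖v‖⁻¹) • v)
    rw [hs, real_inner_smul_right] at n0
    have n1 := real_inner_le_norm ((a - d₁) - (t * ‖v‖⁻¹) • v) (a - d₁)
    rw [inner_sub_left, real_inner_self_eq_norm_sq, real_inner_smul_left,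
      real_inner_comm] at n1
    generalize ‖(a - d₀) - (t * ‖v‖⁻¹) • v‖ = X at *
    generalize ‖(a - d₁) - (t * ‖v‖⁻¹) • v‖ = Y at *
    generalize inner ℝ (a - d₀) v = α at *
    generalize inner ℝ (a - d₁) v = β at *
    generalize ‖a - d₀‖ = P at *
    generalize ‖a - d₁‖ = Q at *
    have k0 : X ≤ P - t * ‖v‖⁻¹ * (α / P) + t ^ 2 / (2 * P) := by
      have : P - t * ‖v‖⁻¹ * (α / P) + t ^ 2 / (2 * P) = (X ^ 2 + P ^ 2) / (2 * P) := by
        rw [n0]; field_simp; ring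
      rw [this, le_div_iff₀ (by positivity)]
      nlinarith [sq_nonneg (X - P)]
    have k1 : Q - t * ‖v‖⁻¹ * (β / Q) ≤ Y := by
      have : Q - t * ‖v‖⁻¹ * (β / Q) = (Q ^ 2 - t * ‖v‖⁻¹ * β) / Q := by
        field_simp
      rw [this, div_le_iff₀ hQ]
      exact n1
    have k2 : t ^ 2 / (2 * P) ≤ 2 * t ^ 2 / r := by
      rw [div_le_div_iff₀ (by positivity) hr]
      nlinarith [mul_le_mul_of_nonneg_left h₀ (sq_nonneg t), mul_pos (pow_pos ht 2) hP]
    have k3 : t * ‖v‖⁻¹ * (α / P) - t * ‖v‖⁻¹ * (β / Q) = t * ‖v‖ := by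
      rw [← mul_sub, hiv]; field_simp
    linarith
  · intro _
    rw [div_le_iff₀ hP]
    have hm : AffineMap.lineMap a d₁ (‖a - d₀‖ * ‖a - d₁‖⁻¹) ∈
        ((affineSpan ℝ ({a, d₁} : Set (EuclideanSpace ℝ (Fin n)))) :
          Set (EuclideanSpace ℝ (Fin n))) :=
      AffineMap.lineMap_mem_affineSpan_pair _ _ _
    refine (Metric.infDist_le_dist_of_mem hm).trans (le_of_eq ?_)
    have : d₀ - AffineMap.lineMap a d₁ (‖a - d₀‖ * ‖a - d₁‖⁻¹) = -(‖a - d₀‖ • v) := by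
      rw [hv, smul_sub, smul_smul, smul_smul, mul_inv_cancel₀ hP.ne', AffineMap.lineMap_apply,
        vsub_eq_sub, vadd_eq_add, one_smul]
      module
    rw [dist_eq_norm, this, norm_neg, norm_smul, norm_norm, mul_comm]
end
end

section
/- Let u : ℝ^d → ℝ be 1-Lipschitz with respect to the Euclidean norm. For k = 1, 2, let a_k, b_k ∈ ℝ^d with a_k ≠ b_k and u(a_k) − u(b_k) = ‖a_k − b_k‖, and let y_k be a point of the open segment (b_k, a_k) with u(y₁) = u(y₂). Set χ_k := (a_k − b_k)/‖a_k − b_k‖ and σ := min_{k=1,2} min(‖y_k − a_k‖, ‖y_k − b_k‖). Then ‖χ₁ − χ₂‖ ≤ ‖y₁ − y₂‖ / σ. -/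
open MeasureTheory Metric Filter Topology Set

noncomputable section

/-- `ℝ^d` with the Euclidean norm. -/
abbrev Euc (d : ℕ) := EuclideanSpace ℝ (Fin d)

lemma ray_aux {d : ℕ} (u : Euc d → ℝ) (hu : LipschitzWith 1 u) (a b y : Euc d)
    (hab : a ≠ b) (huab : u a - u b = ‖a - b‖) (hy : y ∈ openSegment ℝ b a) :
    0 < ‖y - a‖ ∧ 0 < ‖y - b‖ ∧ ∀ s : ℝ, |s| ≤ ‖y - a‖ → |s| ≤ ‖y - b‖ →
      u (y + s • (‖a - b‖⁻¹ • (a - b))) = u y + s := by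
  have hL : 0 < ‖a - b‖ := norm_pos_iff.mpr (sub_ne_zero.mpr hab)
  set χ := ‖a - b‖⁻¹ • (a - b) with hχ
  have hχn : ‖χ‖ = 1 := by
    rw [hχ, norm_smul, norm_inv, norm_norm]; field_simp
  have hLχ : ‖a - b‖ • χ = a - b := by
    rw [hχ, smul_smul, mul_inv_cancel₀ hL.ne', one_smul]
  clear_value χ
  generalize ‖a - b‖ = L at *
  have ha : a = b + L • χ := by rw [hLχ]; abel
  obtain ⟨t, r, ht, hr, htr, rfl⟩ := hy
  have hyb : t • b + r • a - b = (r * L) • χ := by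
    rw [ha, ← eq_sub_iff_add_eq] at *
    subst htr
    module
  have hya : t • b + r • a - a = (-(t * L)) • χ := by
    rw [ha, ← eq_sub_iff_add_eq'] at *
    subst htr
    module
  have hlip : ∀ x z, u x - u z ≤ ‖x - z‖ := fun x z => by
    have := hu.dist_le_mul x z
    rw [Real.dist_eq, dist_eq_norm] at this
    simp only [NNReal.coe_one, one_mul] at this
    exact (le_abs_self _).trans this
  have key : ∀ q : ℝ, 0 ≤ q → q ≤ L → u (b + q • χ) = u b + q := by
    intro q h0 h1
    have e1 := hlip (b + q • χ) b
    have e2 := hlip a (b + q • χ)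
    have e3 : a - (b + q • χ) = (L - q) • χ := by rw [ha]; module
    rw [e3, norm_smul, hχn, Real.norm_of_nonneg (by linarith)] at e2
    rw [add_sub_cancel_left, norm_smul, hχn, Real.norm_of_nonneg h0] at e1
    linarith
  have hrL := mul_pos hr hL
  have htL := mul_pos ht hL
  rw [hyb, hya, norm_smul, norm_smul, hχn, norm_neg, Real.norm_of_nonneg htL.le,
    Real.norm_of_nonneg hrL.le, mul_one, mul_one]
  refine ⟨htL, hrL, fun s h1 h2 => ?_⟩
  have hsum : t * L + r * L = L := by rw [← add_mul, htr, one_mul]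
  have hy : t • b + r • a = b + (r * L) • χ := by rw [← hyb]; abel
  have := abs_le.mp h1
  have := abs_le.mp h2
  rw [hy, add_assoc, ← add_smul, key _ (by linarith) (by linarith),
    key _ (by linarith) (by linarith)]
  ring

/-- Directions of transport rays crossing a common level set of a
Kantorovich potential are Lipschitz in the crossing point, with constant `1/σ`, where `σ`
is the minimal distance of the crossing points to the ray ends. -/
theorem stmt11 {d : ℕ} (u : Euc d → ℝ) (hu : LipschitzWith 1 u)
    (a₁ b₁ a₂ b₂ y₁ y₂ : Euc d)
    (hab₁ : a₁ ≠ b₁) (hab₂ : a₂ ≠ b₂)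
    (hu₁ : u a₁ - u b₁ = ‖a₁ - b₁‖) (hu₂ : u a₂ - u b₂ = ‖a₂ - b₂‖)
    (hy₁ : y₁ ∈ openSegment ℝ b₁ a₁) (hy₂ : y₂ ∈ openSegment ℝ b₂ a₂)
    (hlevel : u y₁ = u y₂)
    (σ : ℝ)
    (hσ : σ = min (min ‖y₁ - a₁‖ ‖y₁ - b₁‖) (min ‖y₂ - a₂‖ ‖y₂ - b₂‖)) :
    ‖(‖a₁ - b₁‖⁻¹ • (a₁ - b₁)) - (‖a₂ - b₂‖⁻¹ • (a₂ - b₂))‖ ≤ ‖y₁ - y₂‖ / σ := by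
  obtain ⟨p1, q1, k1⟩ := ray_aux u hu a₁ b₁ y₁ hab₁ hu₁ hy₁
  obtain ⟨p2, q2, k2⟩ := ray_aux u hu a₂ b₂ y₂ hab₂ hu₂ hy₂
  have n1 : ‖‖a₁ - b₁‖⁻¹ • (a₁ - b₁)‖ = 1 := by
    have := norm_pos_iff.mpr (sub_ne_zero.mpr hab₁)
    rw [norm_smul, norm_inv, norm_norm]; field_simp
  have n2 : ‖‖a₂ - b₂‖⁻¹ • (a₂ - b₂)‖ = 1 := by
    have := norm_pos_iff.mpr (sub_ne_zero.mpr hab₂)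
    rw [norm_smul, norm_inv, norm_norm]; field_simp
  generalize ‖a₁ - b₁‖⁻¹ • (a₁ - b₁) = x at *
  generalize ‖a₂ - b₂‖⁻¹ • (a₂ - b₂) = z at *
  have hs : 0 < σ := by rw [hσ]; simp only [lt_min_iff]; exact ⟨⟨p1, q1⟩, p2, q2⟩
  have hle := hσ.le
  simp only [le_min_iff] at hle
  obtain ⟨⟨l1, l2⟩, l3, l4⟩ := hle
  have hlip : ∀ x z, u x - u z ≤ ‖x - z‖ := fun x z => by
    have := hu.dist_le_mul x z
    rw [Real.dist_eq, dist_eq_norm] at this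
    simp only [NNReal.coe_one, one_mul] at this
    exact (le_abs_self _).trans this
  have ab : |σ| = σ := abs_of_pos hs
  have ab' : |-σ| = σ := by rw [abs_neg, ab]
  have A := hlip (y₁ + σ • x) (y₂ + (-σ) • z)
  have B := hlip (y₂ + σ • z) (y₁ + (-σ) • x)
  rw [k1 σ (by rwa [ab]) (by rwa [ab]), k2 (-σ) (by rwa [ab']) (by rwa [ab'])] at A
  rw [k2 σ (by rwa [ab]) (by rwa [ab]), k1 (-σ) (by rwa [ab']) (by rwa [ab'])] at B
  have eA : y₁ + σ • x - (y₂ + (-σ) • z) = (y₁ - y₂) + σ • (x + z) := by module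
  have eB : y₂ + σ • z - (y₁ + (-σ) • x) = -((y₁ - y₂) - σ • (x + z)) := by module
  rw [eA] at A
  rw [eB, norm_neg] at B
  have P := parallelogram_law_with_norm ℝ (y₁ - y₂) (σ • (x + z))
  have Q := parallelogram_law_with_norm ℝ x z
  rw [norm_smul, Real.norm_of_nonneg hs.le] at P
  rw [n1, n2] at Q
  rw [le_div_iff₀ hs]
  refine abs_le_of_sq_le_sq' ?_ (norm_nonneg _) |>.2
  have A' : 2 * σ ≤ ‖y₁ - y₂ + σ • (x + z)‖ := by linarith
  have B' : 2 * σ ≤ ‖y₁ - y₂ - σ • (x + z)‖ := by linarith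
  have A2 := mul_self_le_mul_self (by positivity) A'
  have B2 := mul_self_le_mul_self (by positivity) B'
  have Q2 := congrArg (σ ^ 2 * ·) Q
  nlinarith
end
end

section
/- Let 𝒳, 𝒴 ⊂ ℝ^d be compact sets, let μ and ν be Borel probability measures with supp μ = 𝒳 and supp ν = 𝒴, let π be a coupling of (μ,ν), and let u : ℝ^d → ℝ be a 1-Lipschitz function with ∫ u dμ − ∫ u dν = ∫ ‖x−y‖ dπ(x,y). Then for every x ∈ 𝒳 there exists y ∈ 𝒴 with u(x) − u(y) = ‖x−y‖, and for every y ∈ 𝒴 there exists x ∈ 𝒳 with u(x) − u(y) = ‖x−y‖. In particular, if 𝒳 ∩ 𝒴 = ∅, then every point of 𝒳 ∪ 𝒴 lies on a nondegenerate transport ray, i.e. a segment [a,b] with a ∈ 𝒳, b ∈ 𝒴, a ≠ b and u(a) − u(b) = ‖a−b‖. -/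
open MeasureTheory Metric Filter Topology Set

noncomputable section

/-- A coupling of `μ` and `ν`: a measure on the product whose marginals are `μ` and `ν`. -/
def IsCoupling {d : ℕ} (π : Measure (Euc d × Euc d)) (μ ν : Measure (Euc d)) : Prop :=
  π.map Prod.fst = μ ∧ π.map Prod.snd = ν

/-- If `u` is a Kantorovich potential certifying optimality of a coupling
of measures with full supports `𝒳` and `𝒴`, then every point of `𝒳` (resp. `𝒴`) is linked by
a contact pair to a point of `𝒴` (resp. `𝒳`); in particular, if `𝒳 ∩ 𝒴 = ∅`, every point of
`𝒳 ∪ 𝒴` lies on a nondegenerate transport ray. -/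
theorem stmt12 {d : ℕ} (X Y : Set (Euc d)) (hX : IsCompact X) (hY : IsCompact Y)
    (μ ν : Measure (Euc d)) (hμP : IsProbabilityMeasure μ) (hνP : IsProbabilityMeasure ν)
    (hμX : μ Xᶜ = 0) (hνY : ν Yᶜ = 0)
    (hμsupp : ∀ x ∈ X, ∀ r : ℝ, 0 < r → 0 < μ (Metric.ball x r))
    (hνsupp : ∀ y ∈ Y, ∀ r : ℝ, 0 < r → 0 < ν (Metric.ball y r))
    (π : Measure (Euc d × Euc d)) (hπ : IsCoupling π μ ν)
    (u : Euc d → ℝ) (hu : LipschitzWith 1 u)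
    (hopt : (∫ x, u x ∂μ) - ∫ y, u y ∂ν = ∫ z, ‖z.1 - z.2‖ ∂π) :
    (∀ x ∈ X, ∃ y ∈ Y, u x - u y = ‖x - y‖) ∧
    (∀ y ∈ Y, ∃ x ∈ X, u x - u y = ‖x - y‖) ∧
    (Disjoint X Y → ∀ z ∈ X ∪ Y, ∃ a ∈ X, ∃ b ∈ Y,
      a ≠ b ∧ u a - u b = ‖a - b‖ ∧ z ∈ segment ℝ a b) := by
  obtain ⟨h1, h2⟩ := hπ
  have hfin : IsProbabilityMeasure π := by
    constructor
    have h := hμP.measure_univ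
    rw [← h1, Measure.map_apply measurable_fst MeasurableSet.univ] at h
    simpa using h
  have hx : ∀ᵐ z ∂π, z.1 ∈ X := by
    have h : π.map Prod.fst Xᶜ = 0 := by rw [h1]; exact hμX
    rw [Measure.map_apply measurable_fst hX.measurableSet.compl] at h
    exact h
  have hy : ∀ᵐ z ∂π, z.2 ∈ Y := by
    have h : π.map Prod.snd Yᶜ = 0 := by rw [h2]; exact hνY
    rw [Measure.map_apply measurable_snd hY.measurableSet.compl] at h
    exact h
  have hxy : ∀ᵐ z ∂π, z ∈ X ×ˢ Y := by
    filter_upwards [hx, hy] with z a b using ⟨a, b⟩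
  have integ : ∀ f : Euc d × Euc d → ℝ, Continuous f → Integrable f π := by
    intro f hf
    have h : IntegrableOn f (X ×ˢ Y) π :=
      hf.continuousOn.integrableOn_compact (hX.prod hY)
    rwa [IntegrableOn, Measure.restrict_eq_self_of_ae_mem hxy] at h
  have huc : Continuous u := hu.continuous
  have e1 : ∫ x, u x ∂μ = ∫ z, u z.1 ∂π := by
    rw [← h1]
    exact integral_map measurable_fst.aemeasurable huc.aestronglyMeasurable
  have e2 : ∫ x, u x ∂ν = ∫ z, u z.2 ∂π := by
    rw [← h2]
    exact integral_map measurable_snd.aemeasurable huc.aestronglyMeasurable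
  have i1 : Integrable (fun z : Euc d × Euc d => u z.1) π := integ _ (by fun_prop)
  have i2 : Integrable (fun z : Euc d × Euc d => u z.2) π := integ _ (by fun_prop)
  have i3 : Integrable (fun z : Euc d × Euc d => ‖z.1 - z.2‖) π := integ _ (by fun_prop)
  have i4 : Integrable (fun z : Euc d × Euc d => u z.1 - u z.2) π := integ _ (by fun_prop)
  have i5 : Integrable (fun z : Euc d × Euc d => ‖z.1 - z.2‖ - (u z.1 - u z.2)) π :=
    integ _ (by fun_prop)
  have hle : ∀ a b, u a - u b ≤ ‖a - b‖ := by
    intro a b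
    have h := hu.dist_le_mul a b
    rw [Real.dist_eq, dist_eq_norm] at h
    simp only [NNReal.coe_one, one_mul] at h
    exact (le_abs_self _).trans h
  have hzero : ∫ z, (‖z.1 - z.2‖ - (u z.1 - u z.2)) ∂π = 0 := by
    rw [integral_sub i3 i4, integral_sub i1 i2, ← hopt, e1, e2]
    ring
  have hae : ∀ᵐ z ∂π, u z.1 - u z.2 = ‖z.1 - z.2‖ := by
    have hnn : 0 ≤ fun z : Euc d × Euc d => ‖z.1 - z.2‖ - (u z.1 - u z.2) := by
      intro z
      exact sub_nonneg.2 (hle z.1 z.2)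
    have h := (integral_eq_zero_iff_of_nonneg hnn i5).1 hzero
    filter_upwards [h] with z hz
    simp only [Pi.zero_apply] at hz
    linarith
  let C : Set (Euc d × Euc d) := (X ×ˢ Y) ∩ {z | u z.1 - u z.2 = ‖z.1 - z.2‖}
  have hC : IsCompact C := (hX.prod hY).inter_right
    (isClosed_eq (by fun_prop) (by fun_prop))
  have hCae : ∀ᵐ z ∂π, z ∈ C := by
    filter_upwards [hxy, hae] with z a b using ⟨a, b⟩
  have key : ∀ (p : Euc d × Euc d → Euc d) (ρ : Measure (Euc d)), Continuous p →
      π.map p = ρ → ∀ x, (∀ r : ℝ, 0 < r → 0 < ρ (Metric.ball x r)) → ∃ z ∈ C, p z = x := by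
    intro p ρ hp hρ x hpos
    by_contra hne
    have hcl : IsClosed (p '' C) := (hC.image hp).isClosed
    have hmem : (p '' C)ᶜ ∈ 𝓝 x := hcl.isOpen_compl.mem_nhds hne
    obtain ⟨r, hr, hsub⟩ := Metric.mem_nhds_iff.1 hmem
    have h := hpos r hr
    rw [← hρ, Measure.map_apply hp.measurable measurableSet_ball] at h
    have hC0 : π Cᶜ = 0 := hCae
    have hss : p ⁻¹' Metric.ball x r ⊆ Cᶜ := by
      intro z hz hzC
      exact hsub hz ⟨z, hzC, rfl⟩
    exact h.ne' (measure_mono_null hss hC0)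
  have A : ∀ x ∈ X, ∃ y ∈ Y, u x - u y = ‖x - y‖ := by
    intro x hxX
    obtain ⟨z, ⟨hz, he⟩, rfl⟩ := key Prod.fst μ continuous_fst h1 x (hμsupp x hxX)
    exact ⟨z.2, hz.2, he⟩
  have B : ∀ y ∈ Y, ∃ x ∈ X, u x - u y = ‖x - y‖ := by
    intro y hyY
    obtain ⟨z, ⟨hz, he⟩, rfl⟩ := key Prod.snd ν continuous_snd h2 y (hνsupp y hyY)
    exact ⟨z.1, hz.1, he⟩
  refine ⟨A, B, fun hd z hz => ?_⟩
  rcases hz with hz | hz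
  · obtain ⟨y, hyY, he⟩ := A z hz
    exact ⟨z, hz, y, hyY, hd.ne_of_mem hz hyY, he, left_mem_segment ℝ z y⟩
  · obtain ⟨x, hxX, he⟩ := B z hz
    exact ⟨x, hxX, z, hz, hd.ne_of_mem hxX hz, he, right_mem_segment ℝ x z⟩
end
end

section
/- Let S and T be compact metric spaces equipped with Borel probability measures μ₀ and ν₀, and let F : S × T → ℝ be continuous with 0 < m ≤ F(x,y) ≤ M for all (x,y) and some constants m, M. Then there exist bounded Borel functions 𝔣 : S → ℝ and 𝔤 : T → ℝ satisfying the Schrödinger system 𝔣(x) + log ∫_T F(x,y) e^{𝔤(y)} dν₀(y) = 0 for all x ∈ S and 𝔤(y) + log ∫_S F(x,y) e^{𝔣(x)} dμ₀(x) = 0 for all y ∈ T. Moreover, the measure on S × T with density (x,y) ↦ F(x,y) e^{𝔣(x)+𝔤(y)} with respect to μ₀ ⊗ ν₀ is a probability measure whose first marginal is μ₀ and whose second marginal is ν₀; and the pair (𝔣,𝔤) is unique up to replacing it by (𝔣 + s, 𝔤 − s) for a constant s ∈ ℝ, in the sense of μ₀-a.e. and ν₀-a.e. equality. -/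
open MeasureTheory Metric Filter Topology Set

noncomputable section

/-- Elementary scalar inequality behind the contraction. -/
lemma aux_scalar (δ D D0 : ℝ) (hδ : 0 ≤ δ) (hD : 0 ≤ D) (hDD : D ≤ D0) :
    (1 - δ) * Real.exp D + δ ≤ Real.exp ((1 - δ * Real.exp (-D0)) * D) := by
  set t := δ * Real.exp (-D0) * D with ht
  have h1 : Real.exp ((1 - δ * Real.exp (-D0)) * D) = Real.exp D * Real.exp (-t) := by
    rw [← Real.exp_add]; congr 1; rw [ht]; ring
  have h2 : 1 - t ≤ Real.exp (-t) := by linarith [Real.add_one_le_exp (-t)]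
  have h3 : Real.exp D * (1 - t) ≤ Real.exp D * Real.exp (-t) :=
    mul_le_mul_of_nonneg_left h2 (Real.exp_pos D).le
  have h4 : Real.exp D * t ≤ δ * D := by
    have : Real.exp D * Real.exp (-D0) ≤ 1 := by
      rw [← Real.exp_add]; exact Real.exp_le_one_iff.2 (by linarith)
    have h5 : Real.exp D * t = (δ * D) * (Real.exp D * Real.exp (-D0)) := by rw [ht]; ring
    rw [h5]
    exact mul_le_of_le_one_right (mul_nonneg hδ hD) this
  have h6 : δ * D ≤ δ * (Real.exp D - 1) :=
    mul_le_mul_of_nonneg_left (by linarith [Real.add_one_le_exp D]) hδ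
  rw [h1]
  nlinarith

lemma aux_integrable {T : Type*} [MeasurableSpace T] (ν : Measure T) [IsProbabilityMeasure ν]
    {k g : T → ℝ} (hk : Measurable k) (hg : Measurable g) {m M B : ℝ} (hm : 0 < m)
    (hkb : ∀ y, m ≤ k y ∧ k y ≤ M) (hB : ∀ y, |g y| ≤ B) :
    Integrable (fun y => k y * Real.exp (g y)) ν := by
  refine Integrable.of_bound (C := M * Real.exp B)
    (hk.mul (Real.measurable_exp.comp hg)).aestronglyMeasurable (ae_of_all _ fun y => ?_)
  have h1 := hkb y
  rw [Real.norm_of_nonneg (mul_nonneg (by linarith) (Real.exp_pos _).le)]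
  exact mul_le_mul h1.2 (Real.exp_le_exp.2 (le_of_abs_le (hB y))) (Real.exp_pos _).le
    (by linarith)

lemma aux_pos {T : Type*} [MeasurableSpace T] (ν : Measure T) [IsProbabilityMeasure ν]
    {k g : T → ℝ} (hk : Measurable k) (hg : Measurable g) {m M B : ℝ} (hm : 0 < m)
    (hkb : ∀ y, m ≤ k y ∧ k y ≤ M) (hB : ∀ y, |g y| ≤ B) :
    0 < ∫ y, k y * Real.exp (g y) ∂ν := by
  have h : ∫ y, m * Real.exp (-B) ∂ν ≤ ∫ y, k y * Real.exp (g y) ∂ν := by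
    refine integral_mono (integrable_const _) (aux_integrable ν hk hg hm hkb hB) fun y => ?_
    exact mul_le_mul (hkb y).1 (Real.exp_le_exp.2 (neg_le_of_abs_le (hB y)))
      (Real.exp_pos _).le (by linarith [hkb y])
  have h2 : 0 < m * Real.exp (-B) := by positivity
  simp at h
  linarith

lemma aux_lin {T : Type*} [MeasurableSpace T] (ν : Measure T) {p q r s : T → ℝ}
    (hp : Integrable p ν) (hq : Integrable q ν) (hr : Integrable r ν) (hs : Integrable s ν)
    (a b c d : ℝ) :
    ∫ y, ((a * p y - b * q y) - (c * r y - d * s y)) ∂ν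
      = (a * (∫ y, p y ∂ν) - b * (∫ y, q y ∂ν)) - (c * (∫ y, r y ∂ν) - d * (∫ y, s y ∂ν)) := by
  have h1 : Integrable (fun y => a * p y - b * q y) ν := (hp.const_mul a).sub (hq.const_mul b)
  have h2 : Integrable (fun y => c * r y - d * s y) ν := (hr.const_mul c).sub (hs.const_mul d)
  rw [integral_sub h1 h2, integral_sub (hp.const_mul a) (hq.const_mul b),
    integral_sub (hr.const_mul c) (hs.const_mul d)]
  simp only [integral_const_mul]

/-- Contraction of the oscillation for a half step. -/
lemma aux_contr {T : Type*} [MeasurableSpace T] (ν : Measure T) [IsProbabilityMeasure ν]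
    {k k' g g' : T → ℝ} (hk : Measurable k) (hk' : Measurable k')
    (hg : Measurable g) (hg' : Measurable g') {m M B : ℝ} (hm : 0 < m)
    (hkb : ∀ y, m ≤ k y ∧ k y ≤ M) (hkb' : ∀ y, m ≤ k' y ∧ k' y ≤ M)
    (hB : ∀ y, |g y| ≤ B) (hB' : ∀ y, |g' y| ≤ B) (D D0 : ℝ) (hD : 0 ≤ D) (hDD : D ≤ D0)
    (hosc : ∀ y y', (g' y - g y) - (g' y' - g y') ≤ D) :
    (Real.log (∫ y, k y * Real.exp (g' y) ∂ν) - Real.log (∫ y, k y * Real.exp (g y) ∂ν))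
    - (Real.log (∫ y, k' y * Real.exp (g' y) ∂ν) - Real.log (∫ y, k' y * Real.exp (g y) ∂ν))
      ≤ (1 - m / M * Real.exp (-D0)) * D := by
  obtain ⟨y0⟩ : Nonempty T := nonempty_of_isProbabilityMeasure ν
  have hM : 0 < M := by linarith [hkb y0]
  set δ := m / M with hδ
  have hδ0 : 0 < δ := div_pos hm hM
  have hδM : δ * M = m := by rw [hδ]; field_simp
  have hδ1 : δ ≤ 1 := by rw [hδ, div_le_one hM]; linarith [hkb y0]
  obtain ⟨a, ha1, ha2⟩ : ∃ a, (∀ y, a ≤ g' y - g y) ∧ ∀ y, g' y - g y ≤ a + D := by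
    have hbdd : BddBelow (range fun y => g' y - g y) :=
      ⟨g' y0 - g y0 - D, by rintro _ ⟨y, rfl⟩; have := hosc y0 y; simp only; linarith⟩
    have : Nonempty T := ⟨y0⟩
    refine ⟨⨅ y, (g' y - g y), fun y => ciInf_le hbdd y, fun y => ?_⟩
    have : g' y - g y - D ≤ ⨅ y, (g' y - g y) := le_ciInf fun y' => by linarith [hosc y y']
    linarith
  set E := Real.exp D with hE
  set α := Real.exp a with hα
  have hα0 : 0 < α := Real.exp_pos a
  have hw1 : ∀ y, α * Real.exp (g y) ≤ Real.exp (g' y) := fun y => by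
    rw [hα, ← Real.exp_add]; exact Real.exp_le_exp.2 (by linarith [ha1 y])
  have hw2 : ∀ y, Real.exp (g' y) ≤ E * α * Real.exp (g y) := fun y => by
    rw [hα, hE, ← Real.exp_add, ← Real.exp_add]; exact Real.exp_le_exp.2 (by linarith [ha2 y])
  have one : ∀ y : T, m / m ≤ (1:ℝ) ∧ (1:ℝ) ≤ 1 := fun y => by rw [div_self hm.ne']; simp
  have iw := aux_integrable ν (k := fun _ => 1) measurable_const hg (div_pos hm hm) one hB
  have iw' := aux_integrable ν (k := fun _ => 1) measurable_const hg' (div_pos hm hm) one hB'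
  have pw := aux_pos ν (k := fun _ => 1) measurable_const hg (div_pos hm hm) one hB
  simp only [one_mul] at iw iw' pw
  set W := ∫ y, Real.exp (g y) ∂ν with hW
  set W' := ∫ y, Real.exp (g' y) ∂ν with hW'
  have hWW : α * W ≤ W' := by
    rw [hW, hW', ← integral_const_mul]; exact integral_mono (iw.const_mul α) iw' hw1
  have key : ∀ q : T → ℝ, Measurable q → (∀ y, m ≤ q y ∧ q y ≤ M) →
      (∫ y, q y * Real.exp (g' y) ∂ν) * W
        ≤ (∫ y, q y * Real.exp (g y) ∂ν) * ((1 - δ) * E * α * W + δ * W') ∧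
      (∫ y, q y * Real.exp (g y) ∂ν) * ((1 - δ) * α * W + δ * W')
        ≤ (∫ y, q y * Real.exp (g' y) ∂ν) * W := by
    intro q hq hqb
    have iq := aux_integrable ν hq hg hm hqb hB
    have iq' := aux_integrable ν hq hg' hm hqb hB'
    set I := ∫ y, q y * Real.exp (g y) ∂ν with hI
    set I' := ∫ y, q y * Real.exp (g' y) ∂ν with hI'
    have hIW : I ≤ M * W := by
      rw [hI, hW, ← integral_const_mul]
      exact integral_mono iq (iw.const_mul M) fun y =>
        mul_le_mul_of_nonneg_right (hqb y).2 (Real.exp_pos _).le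
    have hq0 : ∀ y, 0 ≤ q y * W - δ * I := fun y => by
      have h1 : δ * I ≤ δ * (M * W) := mul_le_mul_of_nonneg_left hIW hδ0.le
      have h2 : m * W ≤ q y * W := mul_le_mul_of_nonneg_right (hqb y).1 pw.le
      have h3 : δ * (M * W) = m * W := by rw [← mul_assoc, hδM]
      linarith
    constructor
    · have h : 0 ≤ ∫ y, (q y * W - δ * I) * (E * α * Real.exp (g y) - Real.exp (g' y)) ∂ν :=
        integral_nonneg fun y => mul_nonneg (hq0 y) (by linarith [hw2 y])
      have e : (fun y => (q y * W - δ * I) * (E * α * Real.exp (g y) - Real.exp (g' y)))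
          = fun y => ((W * E * α) * (q y * Real.exp (g y)) - W * (q y * Real.exp (g' y)))
            - ((δ * I * E * α) * Real.exp (g y) - (δ * I) * Real.exp (g' y)) := by
        funext y; ring
      rw [e, aux_lin ν iq iq' iw iw'] at h
      rw [← hI, ← hI', ← hW, ← hW'] at h
      linarith
    · have h : 0 ≤ ∫ y, (q y * W - δ * I) * (Real.exp (g' y) - α * Real.exp (g y)) ∂ν :=
        integral_nonneg fun y => mul_nonneg (hq0 y) (by linarith [hw1 y])
      have e : (fun y => (q y * W - δ * I) * (Real.exp (g' y) - α * Real.exp (g y)))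
          = fun y => (W * (q y * Real.exp (g' y)) - (W * α) * (q y * Real.exp (g y)))
            - ((δ * I) * Real.exp (g' y) - (δ * I * α) * Real.exp (g y)) := by
        funext y; ring
      rw [e, aux_lin ν iq' iq iw' iw] at h
      rw [← hI, ← hI', ← hW, ← hW'] at h
      linarith
  have K1 := (key k hk hkb).1
  have K2 := (key k' hk' hkb').2
  have p1 := aux_pos ν hk hg hm hkb hB
  have p1' := aux_pos ν hk hg' hm hkb hB'
  have p2 := aux_pos ν hk' hg hm hkb' hB
  have p2' := aux_pos ν hk' hg' hm hkb' hB'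
  set I1 := ∫ y, k y * Real.exp (g y) ∂ν
  set I1' := ∫ y, k y * Real.exp (g' y) ∂ν
  set I2 := ∫ y, k' y * Real.exp (g y) ∂ν
  set I2' := ∫ y, k' y * Real.exp (g' y) ∂ν
  have hs := aux_scalar δ D D0 hδ0.le hD hDD
  set κ := (1 - δ * Real.exp (-D0)) * D with hκ
  have hE1 : 1 ≤ E := Real.one_le_exp hD
  have hκ1 : 1 ≤ Real.exp κ := by nlinarith
  have hU : (1 - δ) * E * α * W + δ * W' ≤ Real.exp κ * ((1 - δ) * α * W + δ * W') := by
    have h1 : ((1 - δ) * E + δ) * (α * W) ≤ Real.exp κ * (α * W) :=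
      mul_le_mul_of_nonneg_right hs (mul_pos hα0 pw).le
    have h2 : 1 * (δ * (W' - α * W)) ≤ Real.exp κ * (δ * (W' - α * W)) :=
      mul_le_mul_of_nonneg_right hκ1 (mul_nonneg hδ0.le (by linarith))
    nlinarith
  have hfin : I1' * I2 ≤ Real.exp κ * (I1 * I2') := by
    have h1 : (I1' * W) * I2 ≤ I1 * ((1 - δ) * E * α * W + δ * W') * I2 :=
      mul_le_mul_of_nonneg_right K1 p2.le
    have h2 := mul_le_mul_of_nonneg_left hU (mul_pos p1 p2).le
    have h3 := mul_le_mul_of_nonneg_left K2 (mul_pos (Real.exp_pos κ) p1).le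
    have h4 : (I1' * I2) * W ≤ (Real.exp κ * (I1 * I2')) * W := by linarith
    exact le_of_mul_le_mul_right h4 pw
  have hl := Real.log_le_log (mul_pos p1' p2) hfin
  rw [Real.log_mul p1'.ne' p2.ne', Real.log_mul (Real.exp_pos κ).ne' (mul_pos p1 p2').ne',
    Real.log_exp, Real.log_mul p1.ne' p2'.ne'] at hl
  linarith

/-- The half step as a map on continuous functions. -/
lemma aux_half {S T : Type*}
    [MetricSpace S] [CompactSpace S]
    [MetricSpace T] [CompactSpace T] [MeasurableSpace T] [BorelSpace T]
    (ν : Measure T) [IsProbabilityMeasure ν]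
    (F : S × T → ℝ) (hF : Continuous F) (m M : ℝ) (hm : 0 < m)
    (hFb : ∀ z, m ≤ F z ∧ F z ≤ M) :
    ∃ L : C(T, ℝ) → C(S, ℝ), ∀ g x,
      L g x = - Real.log (∫ y, F (x, y) * Real.exp (g y) ∂ν) := by
  refine ⟨fun g => ⟨fun x => - Real.log (∫ y, F (x, y) * Real.exp (g y) ∂ν), ?_⟩,
    fun g x => rfl⟩
  refine (Continuous.log ?_ fun x => ?_).neg
  · have h : Continuous (Function.uncurry fun x y => F (x, y) * Real.exp (g y)) := by
      unfold Function.uncurry; fun_prop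
    have := continuous_parametric_integral_of_continuous (μ := ν) h isCompact_univ
    simpa using this
  · exact (aux_pos ν (k := fun y => F (x, y))
      (show Continuous fun y => F (x, y) by fun_prop).measurable g.continuous.measurable hm
      (fun y => hFb _) (fun y => g.norm_coe_le_norm y)).ne'

lemma aux_swap {S T : Type*} [MeasurableSpace S] [MeasurableSpace T]
    (μ : Measure S) (ν : Measure T) [IsProbabilityMeasure μ] [IsProbabilityMeasure ν]
    (F : S × T → ℝ) (hF : Measurable F) (m M : ℝ) (hm : 0 < m)
    (hFb : ∀ z, m ≤ F z ∧ F z ≤ M) (f : S → ℝ) (g : T → ℝ) (hf : Measurable f)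
    (hg : Measurable g) (B C : ℝ) (hB : ∀ x, |f x| ≤ B) (hC : ∀ y, |g y| ≤ C) (c : ℝ)
    (h1 : ∀ y, g y = - Real.log (∫ x, F (x, y) * Real.exp (f x) ∂μ))
    (h2 : ∀ x, f x + c = - Real.log (∫ y, F (x, y) * Real.exp (g y) ∂ν)) : c = 0 := by
  have hint : Integrable (Function.uncurry fun x y => F (x, y) * Real.exp (f x + g y))
      (μ.prod ν) :=
    aux_integrable (μ.prod ν) (k := F) (g := fun z => f z.1 + g z.2) hF (by fun_prop) hm hFb
      (B := B + C) fun z => (abs_add_le _ _).trans (add_le_add (hB _) (hC _))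
  have hs := integral_integral_swap hint
  have e1 : ∀ x, ∫ y, F (x, y) * Real.exp (f x + g y) ∂ν = Real.exp (-c) := fun x => by
    have p := aux_pos ν (k := fun y => F (x, y)) (by fun_prop) hg hm (fun y => hFb _) hC
    have : (fun y => F (x, y) * Real.exp (f x + g y))
        = fun y => Real.exp (f x) * (F (x, y) * Real.exp (g y)) := by
      funext y; rw [Real.exp_add]; ring
    rw [this, integral_const_mul, ← Real.exp_log p, ← Real.exp_add]
    congr 1; linarith [h2 x]
  have e2 : ∀ y, ∫ x, F (x, y) * Real.exp (f x + g y) ∂μ = 1 := fun y => by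
    have p := aux_pos μ (k := fun x => F (x, y)) (by fun_prop) hf hm (fun y => hFb _) hB
    have : (fun x => F (x, y) * Real.exp (f x + g y))
        = fun x => Real.exp (g y) * (F (x, y) * Real.exp (f x)) := by
      funext x; rw [Real.exp_add]; ring
    rw [this, integral_const_mul, ← Real.exp_log p, ← Real.exp_add, ← Real.exp_zero]
    congr 1; linarith [h1 y]
  simp only [e1, e2] at hs
  simp at hs
  exact hs

lemma aux_marg {S T : Type*} [MeasurableSpace S] [MeasurableSpace T]
    (μ : Measure S) (ν : Measure T) [IsProbabilityMeasure μ] [IsProbabilityMeasure ν]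
    (F : S × T → ℝ) (hF : Measurable F) (m M : ℝ) (hm : 0 < m)
    (hFb : ∀ z, m ≤ F z ∧ F z ≤ M) (f : S → ℝ) (g : T → ℝ) (hf : Measurable f)
    (hg : Measurable g) (B C : ℝ) (hB : ∀ x, |f x| ≤ B) (hC : ∀ y, |g y| ≤ C)
    (h1 : ∀ x, f x + Real.log (∫ y, F (x, y) * Real.exp (g y) ∂ν) = 0)
    (h2 : ∀ y, g y + Real.log (∫ x, F (x, y) * Real.exp (f x) ∂μ) = 0) :
    ((μ.prod ν).withDensity
          (fun z => ENNReal.ofReal (F z * Real.exp (f z.1 + g z.2)))).map Prod.fst = μ ∧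
    ((μ.prod ν).withDensity
          (fun z => ENNReal.ofReal (F z * Real.exp (f z.1 + g z.2)))).map Prod.snd = ν := by
  have hmeas : Measurable fun z : S × T => ENNReal.ofReal (F z * Real.exp (f z.1 + g z.2)) := by
    fun_prop
  have e1 : ∀ x, ∫⁻ y, ENNReal.ofReal (F (x, y) * Real.exp (f x + g y)) ∂ν = 1 := fun x => by
    have p := aux_pos ν (k := fun y => F (x, y)) (by fun_prop) hg hm (fun y => hFb _) hC
    have i := aux_integrable ν (k := fun y => F (x, y)) (by fun_prop) hg hm (fun y => hFb _) hC
    have : (fun y => F (x, y) * Real.exp (f x + g y))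
        = fun y => Real.exp (f x) * (F (x, y) * Real.exp (g y)) := by
      funext y; rw [Real.exp_add]; ring
    rw [← ofReal_integral_eq_lintegral_ofReal (by rw [this]; exact i.const_mul _)
      (ae_of_all _ fun y => mul_nonneg (by linarith [hFb (x, y)]) (Real.exp_pos _).le),
      this, integral_const_mul, ← Real.exp_log p, ← Real.exp_add, h1 x]
    simp
  have e2 : ∀ y, ∫⁻ x, ENNReal.ofReal (F (x, y) * Real.exp (f x + g y)) ∂μ = 1 := fun y => by
    have p := aux_pos μ (k := fun x => F (x, y)) (by fun_prop) hf hm (fun y => hFb _) hB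
    have i := aux_integrable μ (k := fun x => F (x, y)) (by fun_prop) hf hm (fun y => hFb _) hB
    have : (fun x => F (x, y) * Real.exp (f x + g y))
        = fun x => Real.exp (g y) * (F (x, y) * Real.exp (f x)) := by
      funext x; rw [Real.exp_add]; ring
    rw [← ofReal_integral_eq_lintegral_ofReal (by rw [this]; exact i.const_mul _)
      (ae_of_all _ fun x => mul_nonneg (by linarith [hFb (x, y)]) (Real.exp_pos _).le),
      this, integral_const_mul, ← Real.exp_log p, ← Real.exp_add, h2 y]
    simp
  constructor
  · ext A hA
    rw [Measure.map_apply measurable_fst hA, withDensity_apply _ (measurable_fst hA),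
      ← prod_univ, ← Measure.prod_restrict, Measure.restrict_univ,
      lintegral_prod _ hmeas.aemeasurable]
    simp [e1]
  · ext A hA
    rw [Measure.map_apply measurable_snd hA, withDensity_apply _ (measurable_snd hA),
      ← univ_prod, ← Measure.prod_restrict, Measure.restrict_univ,
      lintegral_prod_symm _ hmeas.aemeasurable]
    simp [e2]

/-- Existence of continuous solutions. -/
lemma aux_exists {S T : Type*}
    [MetricSpace S] [CompactSpace S] [MeasurableSpace S] [BorelSpace S]
    [MetricSpace T] [CompactSpace T] [MeasurableSpace T] [BorelSpace T]
    (μ : Measure S) (ν : Measure T) [IsProbabilityMeasure μ] [IsProbabilityMeasure ν]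
    (F : S × T → ℝ) (hF : Continuous F) (m M : ℝ) (hm : 0 < m)
    (hFb : ∀ z, m ≤ F z ∧ F z ≤ M) :
    ∃ f : C(S, ℝ), ∃ g : C(T, ℝ),
      (∀ x, f x + Real.log (∫ y, F (x, y) * Real.exp (g y) ∂ν) = 0) ∧
      (∀ y, g y + Real.log (∫ x, F (x, y) * Real.exp (f x) ∂μ) = 0) := by
  obtain ⟨x0⟩ : Nonempty S := nonempty_of_isProbabilityMeasure μ
  obtain ⟨y0⟩ : Nonempty T := nonempty_of_isProbabilityMeasure ν
  have hM : 0 < M := by linarith [hFb (x0, y0)]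
  have hδ1 : m / M ≤ 1 := by rw [div_le_one hM]; linarith [hFb (x0, y0)]
  have hδ0 : 0 < m / M := div_pos hm hM
  obtain ⟨L, hL⟩ := aux_half ν F hF m M hm hFb
  obtain ⟨N, hN⟩ := aux_half (S := T) μ (fun z => F (z.2, z.1)) (by fun_prop) m M hm
    (fun z => hFb _)
  simp only at hN
  have cL : ∀ g g' : C(T, ℝ), ∀ D D0, 0 ≤ D → D ≤ D0 →
      (∀ y y', (g' y - g y) - (g' y' - g y') ≤ D) →
      ∀ x x', (L g' x - L g x) - (L g' x' - L g x') ≤ (1 - m / M * Real.exp (-D0)) * D := by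
    intro g g' D D0 hD hDD h x x'
    have := aux_contr ν (k := fun y => F (x', y)) (k' := fun y => F (x, y)) (by fun_prop)
      (by fun_prop) g.continuous.measurable g'.continuous.measurable hm (fun y => hFb _)
      (fun y => hFb _) (B := max ‖g‖ ‖g'‖)
      (fun y => (g.norm_coe_le_norm y).trans (le_max_left _ _))
      (fun y => (g'.norm_coe_le_norm y).trans (le_max_right _ _)) D D0 hD hDD h
    simp only [hL]; linarith
  have cN : ∀ g g' : C(S, ℝ), ∀ D D0, 0 ≤ D → D ≤ D0 →
      (∀ y y', (g' y - g y) - (g' y' - g y') ≤ D) →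
      ∀ x x', (N g' x - N g x) - (N g' x' - N g x') ≤ (1 - m / M * Real.exp (-D0)) * D := by
    intro g g' D D0 hD hDD h x x'
    have := aux_contr μ (k := fun y => F (y, x')) (k' := fun y => F (y, x)) (by fun_prop)
      (by fun_prop) g.continuous.measurable g'.continuous.measurable hm (fun y => hFb _)
      (fun y => hFb _) (B := max ‖g‖ ‖g'‖)
      (fun y => (g.norm_coe_le_norm y).trans (le_max_left _ _))
      (fun y => (g'.norm_coe_le_norm y).trans (le_max_right _ _)) D D0 hD hDD h
    simp only [hN]; linarith
  have κle : ∀ D0 : ℝ, 1 - m / M * Real.exp (-D0) ≤ 1 := fun D0 => by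
    have := mul_pos hδ0 (Real.exp_pos (-D0)); linarith
  have κ0 : ∀ D0 : ℝ, 0 ≤ D0 → 0 ≤ 1 - m / M * Real.exp (-D0) := fun D0 h => by
    have h1 : Real.exp (-D0) ≤ 1 := Real.exp_le_one_iff.2 (by linarith)
    have := mul_le_mul hδ1 h1 (Real.exp_pos _).le zero_le_one
    linarith
  set Ψ : C(S, ℝ) → C(S, ℝ) := fun f => L (N f) - ContinuousMap.const S (L (N f) x0) with hΨ
  have Ψa : ∀ f x, Ψ f x = L (N f) x - L (N f) x0 := fun f x => by simp [hΨ]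
  have cΨ : ∀ g g' : C(S, ℝ), ∀ D D0, 0 ≤ D → D ≤ D0 →
      (∀ y y', (g' y - g y) - (g' y' - g y') ≤ D) →
      ∀ x x', (Ψ g' x - Ψ g x) - (Ψ g' x' - Ψ g x') ≤ (1 - m / M * Real.exp (-D0)) * D := by
    intro g g' D D0 hD hDD h x x'
    have h1 := cN g g' D D0 hD hDD h
    have h2 := cL (N g) (N g') D D0 hD hDD
      (fun y y' => (h1 y y').trans (mul_le_of_le_one_left hD (κle D0))) x x'
    simp only [Ψa]; linarith
  set u : ℕ → C(S, ℝ) := fun n => Ψ^[n] 0 with hu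
  have us : ∀ n, u (n + 1) = Ψ (u n) := fun n => Function.iterate_succ_apply' Ψ n 0
  have u0 : ∀ n, u n x0 = 0 := by
    intro n
    cases n with
    | zero => simp [hu]
    | succ n => rw [us, Ψa]; ring
  have oscle : ∀ h h' : C(S, ℝ), ∀ x x', (h' x - h x) - (h' x' - h x') ≤ 2 * dist h' h := by
    intro h h' x x'
    have h1 := ContinuousMap.dist_apply_le_dist (f := h') (g := h) x
    have h2 := ContinuousMap.dist_apply_le_dist (f := h') (g := h) x'
    rw [Real.dist_eq] at h1 h2
    have := abs_le.1 h1
    have := abs_le.1 h2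
    linarith
  have distle : ∀ h h' : C(S, ℝ), ∀ D, 0 ≤ D → h x0 = 0 → h' x0 = 0 →
      (∀ x x', (h' x - h x) - (h' x' - h x') ≤ D) → dist h' h ≤ D := by
    intro h h' D hD e e' H
    rw [ContinuousMap.dist_le hD]
    intro x
    rw [Real.dist_eq, abs_le]
    have := H x x0
    have := H x0 x
    constructor <;> linarith
  set D0 := 2 * dist (u 1) (u 0) with hD0
  have hD00 : 0 ≤ D0 := by positivity
  set κ := 1 - m / M * Real.exp (-D0) with hκ
  have hκ0 : 0 ≤ κ := κ0 D0 hD00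
  have hκ1 : κ < 1 := by
    have := mul_pos hδ0 (Real.exp_pos (-D0)); linarith
  have hosc : ∀ n, ∀ x x', (u (n+1) x - u n x) - (u (n+1) x' - u n x') ≤ D0 * κ ^ n := by
    intro n
    induction n with
    | zero => intro x x'; simpa using oscle (u 0) (u 1) x x'
    | succ n ih =>
      intro x x'
      have := cΨ (u n) (u (n+1)) (D0 * κ ^ n) D0 (by positivity)
        (mul_le_of_le_one_right hD00 (pow_le_one₀ hκ0 hκ1.le)) ih x x'
      rw [← us, ← us] at this
      rw [pow_succ]; linarith
  have hcau : CauchySeq u := by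
    refine cauchySeq_of_le_geometric κ D0 hκ1 fun n => ?_
    rw [dist_comm]
    exact distle _ _ _ (by positivity) (u0 n) (u0 (n+1)) (hosc n)
  obtain ⟨f, hf⟩ := cauchySeq_tendsto_of_complete hcau
  have hfix : Ψ f = f := by
    have h1 : Tendsto (fun n => u (n + 1)) atTop (𝓝 (Ψ f)) := by
      rw [tendsto_iff_dist_tendsto_zero]
      have h2 : Tendsto (fun n => 2 * dist (u n) f) atTop (𝓝 0) := by
        simpa using (tendsto_iff_dist_tendsto_zero.1 hf).const_mul 2
      refine squeeze_zero (fun _ => dist_nonneg) (fun n => ?_) h2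
      refine distle _ _ _ (by positivity) (by rw [Ψa]; ring) (u0 _) fun x x' => ?_
      have := cΨ f (u n) (2 * dist (u n) f) _ (by positivity) le_rfl (oscle _ _) x x'
      rw [us]
      exact this.trans (mul_le_of_le_one_left (by positivity) (κle _))
    exact tendsto_nhds_unique h1 (hf.comp (tendsto_add_atTop_nat 1))
  have hc : L (N f) x0 = 0 := by
    refine aux_swap μ ν F hF.measurable m M hm hFb f (N f) f.continuous.measurable
      (N f).continuous.measurable ‖f‖ ‖N f‖ (fun x => f.norm_coe_le_norm x)
      (fun x => (N f).norm_coe_le_norm x) _ (hN f) fun x => ?_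
    rw [← hL]
    have := Ψa f x
    rw [hfix] at this
    linarith
  refine ⟨f, N f, fun x => ?_, fun y => by rw [hN]; ring⟩
  have h := Ψa f x
  rw [hfix, hc, hL (N f) x] at h
  linarith

/-- Uniqueness: the oscillation of the difference vanishes. -/
lemma aux_unique {S T : Type*} [MeasurableSpace S] [MeasurableSpace T]
    (μ : Measure S) (ν : Measure T) [IsProbabilityMeasure μ] [IsProbabilityMeasure ν]
    (F : S × T → ℝ) (hF : Measurable F) (m M : ℝ) (hm : 0 < m)
    (hFb : ∀ z, m ≤ F z ∧ F z ≤ M) (f f' : S → ℝ) (g g' : T → ℝ) (hf : Measurable f)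
    (hg : Measurable g) (hf' : Measurable f') (hg' : Measurable g')
    (B : ℝ) (hB : ∀ x, |f x| ≤ B) (hC : ∀ y, |g y| ≤ B)
    (hB' : ∀ x, |f' x| ≤ B) (hC' : ∀ y, |g' y| ≤ B)
    (h1 : ∀ x, f x + Real.log (∫ y, F (x, y) * Real.exp (g y) ∂ν) = 0)
    (h2 : ∀ y, g y + Real.log (∫ x, F (x, y) * Real.exp (f x) ∂μ) = 0)
    (h1' : ∀ x, f' x + Real.log (∫ y, F (x, y) * Real.exp (g' y) ∂ν) = 0)
    (h2' : ∀ y, g' y + Real.log (∫ x, F (x, y) * Real.exp (f' x) ∂μ) = 0) :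
    ∃ s : ℝ, (∀ x, f' x = f x + s) ∧ (∀ y, g' y = g y - s) := by
  obtain ⟨x0⟩ : Nonempty S := nonempty_of_isProbabilityMeasure μ
  obtain ⟨y0⟩ : Nonempty T := nonempty_of_isProbabilityMeasure ν
  have hB0 : 0 ≤ B := (abs_nonneg _).trans (hB x0)
  have hM : 0 < M := by linarith [hFb (x0, y0)]
  have hδ1 : m / M ≤ 1 := by rw [div_le_one hM]; linarith [hFb (x0, y0)]
  have hδ0 : 0 < m / M := div_pos hm hM
  set D0 := 4 * B with hD0
  have hD00 : 0 ≤ D0 := by positivity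
  set κ := 1 - m / M * Real.exp (-D0) with hκ
  have hκ0 : 0 ≤ κ := by
    have h1 : Real.exp (-D0) ≤ 1 := Real.exp_le_one_iff.2 (by linarith)
    have := mul_le_mul hδ1 h1 (Real.exp_pos _).le zero_le_one
    linarith
  have hκ1 : κ < 1 := by
    have := mul_pos hδ0 (Real.exp_pos (-D0)); linarith
  have hosc : ∀ n : ℕ, ∀ x x', (f' x - f x) - (f' x' - f x') ≤ D0 * κ ^ n := by
    intro n
    induction n with
    | zero =>
      intro x x'
      have := abs_le.1 (hB x)
      have := abs_le.1 (hB x')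
      have := abs_le.1 (hB' x)
      have := abs_le.1 (hB' x')
      simp only [pow_zero, mul_one]; linarith
    | succ n ih =>
      intro x x'
      have hDn : D0 * κ ^ n ≤ D0 := mul_le_of_le_one_right hD00 (pow_le_one₀ hκ0 hκ1.le)
      have hDp : 0 ≤ D0 * κ ^ n := by positivity
      have hgo : ∀ y y', (g' y - g y) - (g' y' - g y') ≤ D0 * κ ^ n := by
        intro y y'
        have := aux_contr μ (k := fun x => F (x, y')) (k' := fun x => F (x, y)) (by fun_prop)
          (by fun_prop) hf hf' hm (fun y => hFb _) (fun y => hFb _) hB hB' _ D0 hDp hDn ih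
        have h5 : κ * (D0 * κ ^ n) ≤ D0 * κ ^ n := mul_le_of_le_one_left hDp hκ1.le
        linarith [h2 y, h2 y', h2' y, h2' y']
      have := aux_contr ν (k := fun y => F (x', y)) (k' := fun y => F (x, y)) (by fun_prop)
          (by fun_prop) hg hg' hm (fun y => hFb _) (fun y => hFb _) hC hC' _ D0 hDp hDn hgo
      rw [pow_succ]
      linarith [h1 x, h1 x', h1' x, h1' x']
  have hlim : Tendsto (fun n : ℕ => D0 * κ ^ n) atTop (𝓝 0) := by
    simpa using (tendsto_pow_atTop_nhds_zero_of_lt_one hκ0 hκ1).const_mul D0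
  have hz : ∀ x x', (f' x - f x) - (f' x' - f x') ≤ 0 := fun x x' =>
    ge_of_tendsto' hlim fun n => hosc n x x'
  have hfs : ∀ x, f' x = f x + (f' x0 - f x0) := fun x => by linarith [hz x x0, hz x0 x]
  refine ⟨f' x0 - f x0, hfs, fun y => ?_⟩
  set s := f' x0 - f x0
  have p := aux_pos μ (k := fun x => F (x, y)) (by fun_prop) hf hm (fun y => hFb _) hB
  have e : (fun x => F (x, y) * Real.exp (f' x))
      = fun x => Real.exp s * (F (x, y) * Real.exp (f x)) := by
    funext x; rw [hfs x, Real.exp_add]; ring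
  have h5 := h2' y
  rw [e, integral_const_mul, Real.log_mul (Real.exp_pos s).ne' p.ne', Real.log_exp] at h5
  linarith [h2 y]

/-- Existence and uniqueness (up to an additive constant) of Schrödinger
potentials for a continuous kernel bounded between two positive constants on the product
of two compact metric probability spaces. -/
theorem stmt14 (S T : Type*)
    [MetricSpace S] [CompactSpace S] [MeasurableSpace S] [BorelSpace S]
    [MetricSpace T] [CompactSpace T] [MeasurableSpace T] [BorelSpace T]
    (μ₀ : Measure S) (ν₀ : Measure T)
    (hμ₀ : IsProbabilityMeasure μ₀) (hν₀ : IsProbabilityMeasure ν₀)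
    (F : S × T → ℝ) (hF : Continuous F) (m M : ℝ) (hm : 0 < m)
    (hFb : ∀ z, m ≤ F z ∧ F z ≤ M) :
    ∃ 𝔣 : S → ℝ, ∃ 𝔤 : T → ℝ, Measurable 𝔣 ∧ Measurable 𝔤 ∧
      (∃ B : ℝ, ∀ x, |𝔣 x| ≤ B) ∧ (∃ B : ℝ, ∀ y, |𝔤 y| ≤ B) ∧
      (∀ x, 𝔣 x + Real.log (∫ y, F (x, y) * Real.exp (𝔤 y) ∂ν₀) = 0) ∧
      (∀ y, 𝔤 y + Real.log (∫ x, F (x, y) * Real.exp (𝔣 x) ∂μ₀) = 0) ∧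
      IsProbabilityMeasure
        ((μ₀.prod ν₀).withDensity fun z => ENNReal.ofReal (F z * Real.exp (𝔣 z.1 + 𝔤 z.2))) ∧
      ((μ₀.prod ν₀).withDensity
          (fun z => ENNReal.ofReal (F z * Real.exp (𝔣 z.1 + 𝔤 z.2)))).map Prod.fst = μ₀ ∧
      ((μ₀.prod ν₀).withDensity
          (fun z => ENNReal.ofReal (F z * Real.exp (𝔣 z.1 + 𝔤 z.2)))).map Prod.snd = ν₀ ∧
      ∀ 𝔣' : S → ℝ, ∀ 𝔤' : T → ℝ, Measurable 𝔣' → Measurable 𝔤' →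
        (∃ B : ℝ, ∀ x, |𝔣' x| ≤ B) → (∃ B : ℝ, ∀ y, |𝔤' y| ≤ B) →
        (∀ x, 𝔣' x + Real.log (∫ y, F (x, y) * Real.exp (𝔤' y) ∂ν₀) = 0) →
        (∀ y, 𝔤' y + Real.log (∫ x, F (x, y) * Real.exp (𝔣' x) ∂μ₀) = 0) →
        ∃ s : ℝ, (∀ᵐ x ∂μ₀, 𝔣' x = 𝔣 x + s) ∧ (∀ᵐ y ∂ν₀, 𝔤' y = 𝔤 y - s) := by
  obtain ⟨f, g, h1, h2⟩ := aux_exists μ₀ ν₀ F hF m M hm hFb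
  have hf := f.continuous.measurable
  have hg := g.continuous.measurable
  have bf : ∀ x, |f x| ≤ ‖f‖ := fun x => f.norm_coe_le_norm x
  have bg : ∀ y, |g y| ≤ ‖g‖ := fun y => g.norm_coe_le_norm y
  have hmarg := aux_marg μ₀ ν₀ F hF.measurable m M hm hFb f g hf hg _ _ bf bg h1 h2
  refine ⟨f, g, hf, hg, ⟨_, bf⟩, ⟨_, bg⟩, h1, h2, ⟨?_⟩, hmarg.1, hmarg.2, ?_⟩
  · have := congrArg (fun ρ => ρ Set.univ) hmarg.1
    simpa only [Measure.map_apply measurable_fst MeasurableSet.univ, preimage_univ,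
      measure_univ] using this
  · rintro f' g' hf' hg' ⟨B1, hB1⟩ ⟨B2, hB2⟩ h1' h2'
    set B := max (max ‖f‖ ‖g‖) (max B1 B2)
    obtain ⟨s, hs1, hs2⟩ := aux_unique μ₀ ν₀ F hF.measurable m M hm hFb f f' g g' hf hg hf' hg' B
      (fun x => (bf x).trans ((le_max_left _ _).trans (le_max_left _ _)))
      (fun x => (bg x).trans ((le_max_right _ _).trans (le_max_left _ _)))
      (fun x => (hB1 x).trans ((le_max_left _ _).trans (le_max_right _ _)))
      (fun x => (hB2 x).trans ((le_max_right _ _).trans (le_max_right _ _))) h1 h2 h1' h2'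
    exact ⟨s, ae_of_all _ hs1, ae_of_all _ hs2⟩
end
end

section
/- Let 𝒳, 𝒴 ⊂ ℝ^d be compact sets and let u : ℝ^d → ℝ be 1-Lipschitz with respect to the Euclidean norm. Suppose x ∈ 𝒳, y ∈ 𝒴, x ≠ y and u(x) − u(y) = ‖x−y‖. Then there exists a maximal transport ray containing x and y: that is, a closed segment [a,b] with a ∈ 𝒳, b ∈ 𝒴 and u(a) − u(b) = ‖a−b‖ such that [x,y] ⊆ [a,b], and such that no closed segment [a',b'] with a' ∈ 𝒳, b' ∈ 𝒴 and u(a') − u(b') = ‖a'−b'‖ strictly contains [a,b]. -/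
open MeasureTheory Metric Filter Topology Set

noncomputable section

/-- Every pair `(x,y) ∈ 𝒳 × 𝒴` with `x ≠ y` in the contact set
`u(x) − u(y) = ‖x−y‖` of a 1-Lipschitz function `u` extends to a maximal transport ray. -/
theorem stmt15 {d : ℕ} (X Y : Set (Euc d)) (hX : IsCompact X) (hY : IsCompact Y)
    (u : Euc d → ℝ) (hu : LipschitzWith 1 u)
    (x y : Euc d) (hx : x ∈ X) (hy : y ∈ Y) (hxy : x ≠ y)
    (huxy : u x - u y = ‖x - y‖) :
    ∃ a ∈ X, ∃ b ∈ Y, u a - u b = ‖a - b‖ ∧ segment ℝ x y ⊆ segment ℝ a b ∧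
      ¬∃ a' ∈ X, ∃ b' ∈ Y, u a' - u b' = ‖a' - b'‖ ∧
        segment ℝ a b ⊆ segment ℝ a' b' ∧ segment ℝ a b ≠ segment ℝ a' b' := by
  have hseg : ∀ p a b : Euc d, p ∈ segment ℝ a b ↔ dist a p + dist p b = dist a b := by
    intro p a b
    rw [mem_segment_iff_wbtw, dist_add_dist_eq_iff]
  have huc : Continuous u := hu.continuous
  let K : Set (Euc d × Euc d) := (X ×ˢ Y) ∩ {p | u p.1 - u p.2 = ‖p.1 - p.2‖ ∧
    dist p.1 x + dist x p.2 = dist p.1 p.2 ∧ dist p.1 y + dist y p.2 = dist p.1 p.2}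
  have hK : IsCompact K := by
    refine (hX.prod hY).inter_right ?_
    refine IsClosed.inter (isClosed_eq (by fun_prop) (by fun_prop))
      (IsClosed.inter (isClosed_eq (by fun_prop) (by fun_prop))
        (isClosed_eq (by fun_prop) (by fun_prop)))
  have hne : K.Nonempty := ⟨(x, y), ⟨hx, hy⟩, huxy, by simp, by simp⟩
  obtain ⟨⟨a, b⟩, ⟨⟨ha, hb⟩, hab, hxab, hyab⟩, hmax⟩ :=
    hK.exists_isMaxOn hne (f := fun p => ‖p.1 - p.2‖) (by fun_prop)
  have hx' := (hseg x a b).2 hxab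
  have hy' := (hseg y a b).2 hyab
  refine ⟨a, ha, b, hb, hab, (convex_segment a b).segment_subset hx' hy', ?_⟩
  rintro ⟨a', ha', b', hb', hab', hsub, hneq⟩
  have hle : ‖a' - b'‖ ≤ ‖a - b‖ := hmax (a := (a', b'))
    ⟨⟨ha', hb'⟩, hab', (hseg _ _ _).1 (hsub hx'), (hseg _ _ _).1 (hsub hy')⟩
  apply hneq
  have h1 := hsub (left_mem_segment ℝ a b)
  have h2 := hsub (right_mem_segment ℝ a b)
  rw [segment_eq_image'] at h1 h2
  obtain ⟨s, ⟨hs0, hs1⟩, rfl⟩ := h1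
  obtain ⟨t, ⟨ht0, ht1⟩, rfl⟩ := h2
  by_cases h0 : a' = b'
  · subst h0; simp
  have hL : 0 < ‖a' - b'‖ := norm_pos_iff.2 (sub_ne_zero.2 h0)
  have he : (a' + s • (b' - a')) - (a' + t • (b' - a')) = (t - s) • (a' - b') := by module
  simp only [] at hle
  rw [he, norm_smul, Real.norm_eq_abs] at hle
  have h1 : 1 ≤ |t - s| := by
    by_contra! h
    nlinarith
  rcases le_abs.1 h1 with h | h
  · obtain rfl : s = 0 := by linarith
    obtain rfl : t = 1 := by linarith
    simp
  · obtain rfl : s = 1 := by linarith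
    obtain rfl : t = 0 := by linarith
    simp [segment_symm]
end
end
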